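/- arXiv:1912.03745 — 3 statements merged into one kernel-verified Lean document; each statement's English description precedes it below -/
import Mathlib

section
/- Let n ≥ 1, 0 < α < n, and let N be a natural number with 2N > n. Then there exists a constant D > 0 such that for every x ∈ ℝⁿ with ‖x‖ ≥ 1, ∫_{ℝⁿ} ‖y‖^{α−n}·(1 + ‖x − y‖²)^{−N} dy ≤ D·‖x‖^{α−n}. -/
/-!
Split the integral at `‖y‖ = R`, where `R = ‖x‖ / 2`.

For `‖y‖ < R` the triangle inequality gives `‖x - y‖ ≥ R`, so the second factor is at most
`R ^ (-2N)`, while homogeneity gives `∫_{‖y‖ < R} ‖y‖ ^ (α - n) = R ^ α * C` with `C` the finite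
integral over the unit ball (`integrableOn_norm_rpow_ball`, `setIntegral_norm_rpow_ball`). The
contribution is `C * R ^ (α - n) * R ^ (n - 2N)`, and `R ^ (n - 2N) ≤ (1/2) ^ (n - 2N)` because
`R ≥ 1/2` and `n < 2N`.

For `‖y‖ ≥ R` one has `‖y‖ ^ (α - n) ≤ R ^ (α - n)`, and `(1 + ‖x - y‖ ^ 2) ^ (-N)` has a finite
integral independent of `x`, since `n < 2N`. Both contributions are thus `O(R ^ (α - n))`.
-/

open MeasureTheory

theorem integrableOn_norm_rpow_ball (n : ℕ) (hn : 1 ≤ n) (α : ℝ) (hα0 : 0 < α) (R : ℝ) :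
    IntegrableOn (fun y : EuclideanSpace ℝ (Fin n) => ‖y‖ ^ (α - n)) (Metric.ball 0 R) := by
  have : Nonempty (Fin n) := ⟨⟨0, hn⟩⟩
  rw [integrableOn_fun_norm_addHaar volume (f := fun t : ℝ => t ^ (α - n))]
  -- The radial density `t ^ (n - 1) * t ^ (α - n)` is `t ^ (α - 1)`.
  have h : IntegrableOn (fun t : ℝ => t ^ (α - 1)) (Set.Ioo 0 R) :=
    ((intervalIntegral.intervalIntegrable_rpow' (by linarith : -1 < α - 1)).1 :
      IntegrableOn _ (Set.Ioc 0 R)).mono_set Set.Ioo_subset_Ioc_self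
  refine h.congr_fun (fun t ht => ?_) measurableSet_Ioo
  simp only [finrank_euclideanSpace, Fintype.card_fin, smul_eq_mul]
  rw [← Real.rpow_natCast, ← Real.rpow_add ht.1]
  congr 1
  push_cast [hn]
  ring

theorem setIntegral_norm_rpow_ball (n : ℕ) (α : ℝ) (R : ℝ) (hR : 0 < R) :
    ∫ y in Metric.ball (0 : EuclideanSpace ℝ (Fin n)) R, ‖y‖ ^ (α - n) =
      R ^ α * ∫ y in Metric.ball (0 : EuclideanSpace ℝ (Fin n)) 1, ‖y‖ ^ (α - n) := by
  have h := Measure.setIntegral_comp_smul_of_pos volume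
    (fun y : EuclideanSpace ℝ (Fin n) => ‖y‖ ^ (α - n)) (Metric.ball 0 1) hR
  rw [smul_unitBall_of_pos hR] at h
  simp only [norm_smul, Real.norm_of_nonneg hR.le, Real.mul_rpow hR.le (norm_nonneg _),
    integral_const_mul, finrank_euclideanSpace, Fintype.card_fin, smul_eq_mul] at h
  have hp : (0 : ℝ) < R ^ n := by positivity
  rw [Real.rpow_sub hR, Real.rpow_natCast] at h
  field_simp at h
  exact h.symm

/-- For `0 < α < n` and `2N > n`, there is `D > 0` such that for all `‖x‖ ≥ 1`,
`∫ ‖y‖^{α-n}(1 + ‖x-y‖²)^{-N} dy ≤ D ‖x‖^{α-n}`. -/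
theorem riesz_kernel_decay_estimate (n : ℕ) (hn : 1 ≤ n) (α : ℝ)
    (hα0 : 0 < α) (hαn : α < n) (N : ℕ) (hN : n < 2 * N) :
    ∃ D > 0, ∀ x : EuclideanSpace ℝ (Fin n), 1 ≤ ‖x‖ →
      (∫ y : EuclideanSpace ℝ (Fin n),
          ‖y‖ ^ (α - n) * (1 + ‖x - y‖ ^ 2) ^ (-(N : ℝ))) ≤ D * ‖x‖ ^ (α - n) := by
  have hN' : (n : ℝ) < 2 * N := by exact_mod_cast hN
  obtain ⟨C, hC⟩ : ∃ C, C = ∫ y in Metric.ball (0 : EuclideanSpace ℝ (Fin n)) 1, ‖y‖ ^ (α - n) :=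
    ⟨_, rfl⟩
  obtain ⟨J, hJ⟩ : ∃ J, J = ∫ y : EuclideanSpace ℝ (Fin n), (1 + ‖y‖ ^ 2) ^ (-(N : ℝ)) := ⟨_, rfl⟩
  have hC0 : 0 ≤ C := hC ▸ integral_nonneg fun y => by positivity
  have hJ0 : 0 ≤ J := hJ ▸ integral_nonneg fun y => by positivity
  have hJint : Integrable fun y : EuclideanSpace ℝ (Fin n) => (1 + ‖y‖ ^ 2) ^ (-(N : ℝ)) := by
    have := integrable_rpow_neg_one_add_norm_sq (E := EuclideanSpace ℝ (Fin n))
      (μ := volume) (r := 2 * N) (by simpa using hN')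
    convert this using 3
    ring
  refine ⟨(1 / 2) ^ (α - n) * (C * (1 / 2) ^ (n - 2 * N : ℝ) + J) + 1, by positivity,
    fun x hx => ?_⟩
  obtain ⟨R, hRdef⟩ : ∃ R, R = ‖x‖ / 2 := ⟨_, rfl⟩
  have hR : 0 < R := by linarith
  have hR2 : 1 / 2 ≤ R := by linarith
  have hbound : ∀ y : EuclideanSpace ℝ (Fin n),
      ‖y‖ ^ (α - n) * (1 + ‖x - y‖ ^ 2) ^ (-(N : ℝ)) ≤
        (Metric.ball 0 R).indicator (fun y => ‖y‖ ^ (α - n)) y * R ^ (-(2 * N) : ℝ) +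
          R ^ (α - n) * (1 + ‖x - y‖ ^ 2) ^ (-(N : ℝ)) := by
    intro y
    by_cases hy : y ∈ Metric.ball 0 R
    · rw [Set.indicator_of_mem hy]
      have hy' : ‖y‖ < R := by simpa using hy
      have hxy : R ≤ ‖x - y‖ := by linarith [norm_sub_norm_le x y]
      have hle : (1 + ‖x - y‖ ^ 2) ^ (-(N : ℝ)) ≤ R ^ (-(2 * N) : ℝ) := by
        have : R ^ (-(2 * N) : ℝ) = (R ^ 2) ^ (-(N : ℝ)) := by
          rw [← Real.rpow_natCast R 2, ← Real.rpow_mul hR.le]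
          congr 1
          push_cast
          ring
        rw [this]
        exact Real.rpow_le_rpow_of_nonpos (by positivity) (by nlinarith) (by simp)
      have h1 : 0 ≤ R ^ (α - n) * (1 + ‖x - y‖ ^ 2) ^ (-(N : ℝ)) := by positivity
      have h2 := mul_le_mul_of_nonneg_left hle (by positivity : 0 ≤ ‖y‖ ^ (α - n))
      linarith
    · rw [Set.indicator_of_notMem hy, zero_mul, zero_add]
      have hy' : R ≤ ‖y‖ := by simpa using hy
      exact mul_le_mul_of_nonneg_right
        (Real.rpow_le_rpow_of_nonpos hR hy' (by linarith)) (by positivity)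
  have hi1 : Integrable fun y : EuclideanSpace ℝ (Fin n) =>
      (Metric.ball 0 R).indicator (fun y => ‖y‖ ^ (α - n)) y * R ^ (-(2 * N) : ℝ) :=
    ((integrable_indicator_iff measurableSet_ball).2
      (integrableOn_norm_rpow_ball n hn α hα0 R)).mul_const _
  have hi2 : Integrable fun y : EuclideanSpace ℝ (Fin n) =>
      R ^ (α - n) * (1 + ‖x - y‖ ^ 2) ^ (-(N : ℝ)) :=
    (hJint.comp_sub_left x).const_mul _
  have hJx : ∫ y : EuclideanSpace ℝ (Fin n), (1 + ‖x - y‖ ^ 2) ^ (-(N : ℝ)) = J := hJ ▸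
    integral_sub_left_eq_self
      (fun y : EuclideanSpace ℝ (Fin n) => (1 + ‖y‖ ^ 2) ^ (-(N : ℝ))) volume x
  calc _ ≤ ∫ y : EuclideanSpace ℝ (Fin n),
        ((Metric.ball 0 R).indicator (fun y => ‖y‖ ^ (α - n)) y * R ^ (-(2 * N) : ℝ) +
          R ^ (α - n) * (1 + ‖x - y‖ ^ 2) ^ (-(N : ℝ))) :=
        integral_mono_of_nonneg (.of_forall fun y => by positivity) (hi1.add hi2)
          (.of_forall hbound)
    _ = R ^ α * C * R ^ (-(2 * N) : ℝ) + R ^ (α - n) * J := by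
        rw [integral_add hi1 hi2, integral_mul_const, integral_const_mul, hJx,
          integral_indicator measurableSet_ball, setIntegral_norm_rpow_ball n α R hR, hC]
    _ = R ^ (α - n) * (C * R ^ (n - 2 * N : ℝ) + J) := by
        have : R ^ α * R ^ (-(2 * N) : ℝ) = R ^ (α - n) * R ^ (n - 2 * N : ℝ) := by
          rw [← Real.rpow_add hR, ← Real.rpow_add hR]
          congr 1
          ring
        linear_combination C * this
    _ ≤ R ^ (α - n) * (C * (1 / 2) ^ (n - 2 * N : ℝ) + J) := by
        have := Real.rpow_le_rpow_of_nonpos (by norm_num : (0 : ℝ) < 1 / 2) hR2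
          (by linarith : (n - 2 * N : ℝ) ≤ 0)
        gcongr
    _ = (1 / 2) ^ (α - n) * (C * (1 / 2) ^ (n - 2 * N : ℝ) + J) * ‖x‖ ^ (α - n) := by
        rw [hRdef, div_eq_mul_one_div, Real.mul_rpow (norm_nonneg _) (by norm_num)]
        ring
    _ ≤ _ := by
        gcongr
        linarith
end

section
/- Let n ≥ 1, 0 < α < n, and let N be a natural number with 2N > n. Then there exists a constant M > 0 such that for every x ∈ ℝⁿ, ∫_{ℝⁿ} ‖y‖^{α−n}·(1 + ‖x − y‖²)^{−N} dy ≤ M·(1 + ‖x‖²)^{(α−n)/2}. -/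
open MeasureTheory

/-!
Put `r = √(1 + ‖x‖²) / 2`, so that the right-hand side is comparable to `r ^ (α - n)`, and split
the integral at `‖y‖ = r`. For `‖y‖ ≥ r` the factor `‖y‖ ^ (α - n)` is at most `r ^ (α - n)`, and
the other factor has an integral that is finite (as `2N > n`) and independent of `x`.
For `‖y‖ < r` the triangle inequality gives `1 + ‖x - y‖² ≥ r²` (`sq_le_one_add_sq_norm_sub`),
while the integral of `‖y‖ ^ (α - n)` over the ball of radius `r` is a constant times `r ^ α`
(`setIntegral_ball_norm_rpow`). This part is therefore at most a constant times `r ^ (α - 2N)`,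
which is `O(r ^ (α - n))` because `r ≥ 1/2` and `2N > n`.
-/

/-- In a ball of radius `r = √(1 + ‖x‖²) / 2` around the origin, `1 + ‖x - y‖²` stays
above `r²`. -/
lemma sq_le_one_add_sq_norm_sub {E : Type*} [NormedAddCommGroup E] (x y : E) {r : ℝ}
    (hr : 4 * r ^ 2 = 1 + ‖x‖ ^ 2) (hy : ‖y‖ < r) : r ^ 2 ≤ 1 + ‖x - y‖ ^ 2 := by
  have hx : ‖x‖ ≤ ‖x - y‖ + ‖y‖ := by simpa using norm_add_le (x - y) y
  have h0 := norm_nonneg y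
  have h1 := norm_nonneg (x - y)
  have h2 := norm_nonneg x
  by_contra! h
  have htr : ‖x - y‖ < r := by nlinarith
  have hxr : ‖x‖ ^ 2 ≤ (‖x - y‖ + r) ^ 2 := by gcongr; linarith
  nlinarith

lemma integrableOn_ball_norm_rpow {n : ℕ} (hn : 1 ≤ n) {α : ℝ} (hα0 : 0 < α) (r : ℝ) :
    IntegrableOn (fun y : EuclideanSpace ℝ (Fin n) ↦ ‖y‖ ^ (α - n)) (Metric.ball 0 r) := by
  refine integrableOn_ball_of_norm_le_rpow (C := 1) (α := n - α) (by simpa using hn)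
    (by simpa using hα0) (Filter.Eventually.of_forall fun y ↦ ?_)
    (Measurable.aestronglyMeasurable (by fun_prop))
  rw [Real.norm_of_nonneg (by positivity), one_mul, neg_sub]

/-- Homogeneity: the integral of `‖y‖ ^ (α - n)` over the ball of radius `r` scales as `r ^ α`. -/
lemma setIntegral_ball_norm_rpow {n : ℕ} {α : ℝ} {r : ℝ} (hr : 0 < r) :
    ∫ y in Metric.ball (0 : EuclideanSpace ℝ (Fin n)) r, ‖y‖ ^ (α - n) =
      (∫ y in Metric.ball (0 : EuclideanSpace ℝ (Fin n)) 1, ‖y‖ ^ (α - n)) * r ^ α := by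
  have h := Measure.setIntegral_comp_smul_of_pos (volume : Measure (EuclideanSpace ℝ (Fin n)))
    (fun y ↦ ‖y‖ ^ (α - n)) (Metric.ball 0 1) hr
  rw [smul_unitBall_of_pos hr] at h
  simp only [norm_smul, Real.norm_of_nonneg hr.le, Real.mul_rpow hr.le (norm_nonneg _),
    integral_const_mul, finrank_euclideanSpace, Fintype.card_fin, smul_eq_mul] at h
  rw [Real.rpow_sub hr, Real.rpow_natCast] at h
  field_simp at h
  linarith

/-- For `0 < α < n` and `2N > n`, there is `M > 0` such that for every `x ∈ ℝⁿ`,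
`∫ ‖y‖^{α-n}(1 + ‖x-y‖²)^{-N} dy ≤ M (1 + ‖x‖²)^{(α-n)/2}`. -/
theorem riesz_kernel_global_estimate (n : ℕ) (hn : 1 ≤ n) (α : ℝ)
    (hα0 : 0 < α) (hαn : α < n) (N : ℕ) (hN : n < 2 * N) :
    ∃ M > 0, ∀ x : EuclideanSpace ℝ (Fin n),
      (∫ y : EuclideanSpace ℝ (Fin n),
          ‖y‖ ^ (α - n) * (1 + ‖x - y‖ ^ 2) ^ (-(N : ℝ))) ≤
        M * (1 + ‖x‖ ^ 2) ^ ((α - n) / 2) := by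
  set A : ℝ := ∫ y in Metric.ball (0 : EuclideanSpace ℝ (Fin n)) 1, ‖y‖ ^ (α - n) with hA
  set B : ℝ := ∫ y : EuclideanSpace ℝ (Fin n), (1 + ‖y‖ ^ 2) ^ (-(N : ℝ)) with hB
  have hA0 : 0 ≤ A := integral_nonneg fun y ↦ by positivity
  have hB0 : 0 ≤ B := integral_nonneg fun y ↦ by positivity
  have hNn : (n : ℝ) < 2 * N := by exact_mod_cast hN
  have hBint : Integrable (fun y : EuclideanSpace ℝ (Fin n) ↦ (1 + ‖y‖ ^ 2) ^ (-(N : ℝ))) := by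
    have := integrable_rpow_neg_one_add_norm_sq (E := EuclideanSpace ℝ (Fin n)) (μ := volume)
      (r := 2 * N) (by simpa using hNn)
    convert this using 3
    ring
  refine ⟨(A * (1 / 2) ^ ((n : ℝ) - 2 * N) + B) * (1 / 2) ^ (α - n) + 1, by positivity,
    fun x ↦ ?_⟩
  set r : ℝ := √(1 + ‖x‖ ^ 2) * (1 / 2) with hr
  have hr4 : 4 * r ^ 2 = 1 + ‖x‖ ^ 2 := by
    rw [hr, mul_pow, Real.sq_sqrt (by positivity)]; ring
  have hr0 : 0 < r := by positivity
  have hr2 : 1 / 2 ≤ r := by nlinarith [sq_nonneg ‖x‖]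
  have hrpow : r ^ (α - n) = (1 + ‖x‖ ^ 2) ^ ((α - n) / 2) * (1 / 2) ^ (α - n) := by
    rw [hr, Real.mul_rpow (by positivity) (by positivity), Real.sqrt_eq_rpow,
      ← Real.rpow_mul (by positivity)]
    congr 2
    ring
  have hnear : Integrable (fun y : EuclideanSpace ℝ (Fin n) ↦
      (Metric.ball 0 r).indicator (fun y ↦ ‖y‖ ^ (α - n)) y * (r ^ 2) ^ (-(N : ℝ))) :=
    ((integrableOn_ball_norm_rpow hn hα0 r).integrable_indicator measurableSet_ball).mul_const _
  have hfar : Integrable (fun y : EuclideanSpace ℝ (Fin n) ↦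
      r ^ (α - n) * (1 + ‖x - y‖ ^ 2) ^ (-(N : ℝ))) :=
    (hBint.comp_sub_left x).const_mul _
  calc (∫ y : EuclideanSpace ℝ (Fin n), ‖y‖ ^ (α - n) * (1 + ‖x - y‖ ^ 2) ^ (-(N : ℝ)))
      ≤ ∫ y : EuclideanSpace ℝ (Fin n),
          ((Metric.ball 0 r).indicator (fun y ↦ ‖y‖ ^ (α - n)) y * (r ^ 2) ^ (-(N : ℝ)) +
            r ^ (α - n) * (1 + ‖x - y‖ ^ 2) ^ (-(N : ℝ))) := by
        refine integral_mono_of_nonneg (Filter.Eventually.of_forall fun y ↦ by positivity)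
          (hnear.add hfar) (Filter.Eventually.of_forall fun y ↦ ?_)
        simp only
        by_cases hy : ‖y‖ < r
        · rw [Set.indicator_of_mem (by simpa using hy)]
          have h : (1 + ‖x - y‖ ^ 2) ^ (-(N : ℝ)) ≤ (r ^ 2) ^ (-(N : ℝ)) :=
            Real.rpow_le_rpow_of_nonpos (by positivity) (sq_le_one_add_sq_norm_sub x y hr4 hy)
              (by simp)
          calc _ ≤ ‖y‖ ^ (α - n) * (r ^ 2) ^ (-(N : ℝ)) := by gcongr
            _ ≤ _ := le_add_of_nonneg_right (by positivity)
        · rw [Set.indicator_of_notMem (by simpa using hy), zero_mul, zero_add]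
          have h : ‖y‖ ^ (α - n) ≤ r ^ (α - n) :=
            Real.rpow_le_rpow_of_nonpos hr0 (not_lt.mp hy) (by linarith)
          gcongr
    _ = A * r ^ α * (r ^ 2) ^ (-(N : ℝ)) + r ^ (α - n) * B := by
        rw [integral_add hnear hfar, integral_mul_const, integral_const_mul,
          integral_indicator measurableSet_ball, setIntegral_ball_norm_rpow hr0,
          integral_sub_left_eq_self (fun y ↦ (1 + ‖y‖ ^ 2) ^ (-(N : ℝ))) volume x]
    _ = (A * r ^ ((n : ℝ) - 2 * N) + B) * r ^ (α - n) := by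
        have h : r ^ α * (r ^ 2) ^ (-(N : ℝ)) = r ^ ((n : ℝ) - 2 * N) * r ^ (α - n) := by
          rw [← Real.rpow_natCast r 2, ← Real.rpow_mul hr0.le, ← Real.rpow_add hr0,
            ← Real.rpow_add hr0]
          congr 1
          push_cast
          ring
        rw [mul_assoc, h]
        ring
    _ ≤ (A * (1 / 2) ^ ((n : ℝ) - 2 * N) + B) * r ^ (α - n) := by
        have h : r ^ ((n : ℝ) - 2 * N) ≤ (1 / 2) ^ ((n : ℝ) - 2 * N) :=
          Real.rpow_le_rpow_of_nonpos (by norm_num) hr2 (by linarith)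
        gcongr
    _ ≤ _ := by
        rw [hrpow]
        have h : 0 ≤ (1 + ‖x‖ ^ 2) ^ ((α - n) / 2) := by positivity
        linarith
end

section
/- Let n ≥ 1, let s, t ≥ 0, and let 0 < α < n. Suppose there exists K > 0 such that for all Schwartz functions g₀, h₀ : ℝⁿ → ℂ, |∫_{ℝⁿ} ∫_{ℝⁿ} ‖y − x‖^{α−n} (1 + ‖x‖²)^{−s/2} (1 + ‖y‖²)^{−t/2} g₀(x) conj(h₀(y)) dx dy| ≤ K ‖g₀‖_{L²} ‖h₀‖_{L²}. Then there exists a constant K₁ > 0 such that for every natural number m ≥ 1, ∫_{B_m × B_m} (1 + ‖x‖² + ‖y‖²)^{−(n − α + s + t)/2} d(x,y) ≤ K₁·mⁿ, where B_m := {x ∈ ℝⁿ : ‖x‖ ≤ m} and the integral is over B_m × B_m ⊆ ℝⁿ × ℝⁿ with Lebesgue measure. -/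
/-!
The form is tested on `g₀ = h₀ = φ`, a smooth bump equal to `1` on `B_m`, with values in `[0, 1]`
and support in `B_{2m}`. Then `‖φ‖²_{L²} ≤ vol B_{2m} = 2ⁿ vol(B₁) mⁿ`, while every factor of the
kernel is bounded below off the diagonal by a power of `A = 1 + ‖x‖² + ‖y‖²`, because
`‖y - x‖² ≤ 2A`, `1 + ‖x‖² ≤ A` and `1 + ‖y‖² ≤ A` (`kernel_lower_bound`). Hence the form is at
least `2^{(α-n)/2}` times the integral of `A^{-(n-α+s+t)/2}` over `B_m × B_m`.

The iterated Bochner integral of the hypothesis is only meaningful once the integrand is known to be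
integrable on `ℝⁿ × ℝⁿ`; this is `integrable_testForm`, which dominates the integrand by a
convolution integrand of two integrable functions, using `α > 0` for local integrability of
`‖z‖^{α-n}`.
-/

open MeasureTheory

/-- The `L²(ℝⁿ)` norm of `g`. -/
noncomputable def l2Norm (n : ℕ) (g : EuclideanSpace ℝ (Fin n) → ℂ) : ℝ :=
  (∫ x : EuclideanSpace ℝ (Fin n), ‖g x‖ ^ 2) ^ ((1 : ℝ) / 2)

/-- The kernel of the bilinear form, as a function of `(y, x)`. -/
noncomputable def formKernel (n : ℕ) (s t α : ℝ)
    (p : EuclideanSpace ℝ (Fin n) × EuclideanSpace ℝ (Fin n)) : ℝ :=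
  ‖p.1 - p.2‖ ^ (α - n) * (1 + ‖p.2‖ ^ 2) ^ (-s / 2) * (1 + ‖p.1‖ ^ 2) ^ (-t / 2)

lemma formKernel_nonneg (n : ℕ) (s t α : ℝ)
    (p : EuclideanSpace ℝ (Fin n) × EuclideanSpace ℝ (Fin n)) : 0 ≤ formKernel n s t α p := by
  unfold formKernel
  positivity

/-- The point `p.1 = p.2` is excluded because there the kernel takes the value `0`. -/
lemma kernel_lower_bound (n : ℕ) {s t α : ℝ} (hs : 0 ≤ s) (ht : 0 ≤ t) (hαn : α < n)
    (p : EuclideanSpace ℝ (Fin n) × EuclideanSpace ℝ (Fin n)) (hp : p.1 ≠ p.2) :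
    (2 : ℝ) ^ ((α - n) / 2) * (1 + ‖p.1‖ ^ 2 + ‖p.2‖ ^ 2) ^ (-((n : ℝ) - α + s + t) / 2)
      ≤ formKernel n s t α p := by
  obtain ⟨y, x⟩ := p
  simp only [formKernel] at *
  have hA : 0 < 1 + ‖y‖ ^ 2 + ‖x‖ ^ 2 := by positivity
  have hd : 0 < ‖y - x‖ := norm_pos_iff.2 (sub_ne_zero.2 hp)
  have hd2 : ‖y - x‖ ^ 2 ≤ 2 * (1 + ‖y‖ ^ 2 + ‖x‖ ^ 2) := by
    have h1 : ‖y - x‖ ≤ ‖y‖ + ‖x‖ := norm_sub_le y x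
    nlinarith [sq_nonneg (‖y‖ - ‖x‖)]
  have e1 : (2 * (1 + ‖y‖ ^ 2 + ‖x‖ ^ 2)) ^ ((α - n) / 2) ≤ ‖y - x‖ ^ (α - n) := by
    have h := Real.rpow_le_rpow_of_nonpos (z := (α - n) / 2) (by positivity) hd2 (by linarith)
    refine h.trans_eq ?_
    rw [← Real.rpow_natCast ‖y - x‖ 2, ← Real.rpow_mul hd.le]
    congr 1
    push_cast
    ring
  have e2 : (1 + ‖y‖ ^ 2 + ‖x‖ ^ 2) ^ (-s / 2) ≤ (1 + ‖x‖ ^ 2) ^ (-s / 2) :=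
    Real.rpow_le_rpow_of_nonpos (by positivity) (by nlinarith [sq_nonneg ‖y‖]) (by linarith)
  have e3 : (1 + ‖y‖ ^ 2 + ‖x‖ ^ 2) ^ (-t / 2) ≤ (1 + ‖y‖ ^ 2) ^ (-t / 2) :=
    Real.rpow_le_rpow_of_nonpos (by positivity) (by nlinarith [sq_nonneg ‖x‖]) (by linarith)
  calc _ = (2 * (1 + ‖y‖ ^ 2 + ‖x‖ ^ 2)) ^ ((α - n) / 2) * (1 + ‖y‖ ^ 2 + ‖x‖ ^ 2) ^ (-s / 2)
        * (1 + ‖y‖ ^ 2 + ‖x‖ ^ 2) ^ (-t / 2) := by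
        rw [Real.mul_rpow (by norm_num) hA.le, mul_assoc, mul_assoc, ← Real.rpow_add hA,
          ← Real.rpow_add hA]
        congr 2
        ring
    _ ≤ _ := by gcongr

lemma measurable_formKernel (n : ℕ) (s t α : ℝ) : Measurable (formKernel n s t α) := by
  unfold formKernel
  fun_prop

/-- For `‖x‖, ‖y‖ < r` the weights are at most `1` and `y - x` lies in the ball of radius `2r`, so
the integrand is dominated by `1_{B_r}(x) · 1_{B_{2r}}(y - x) ‖y - x‖^{α-n}`. -/
lemma integrable_testForm (n : ℕ) (hn : 1 ≤ n) {s t α : ℝ} (hs : 0 ≤ s) (ht : 0 ≤ t)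
    (hα0 : 0 < α) (φ : ContDiffBump (0 : EuclideanSpace ℝ (Fin n))) :
    Integrable (fun p => formKernel n s t α p * (φ p.2 * φ p.1))
      ((volume : Measure (EuclideanSpace ℝ (Fin n))).prod volume) := by
  set E := EuclideanSpace ℝ (Fin n)
  have hk : IntegrableOn (fun z : E => ‖z‖ ^ (α - n)) (Metric.ball 0 (2 * φ.rOut)) := by
    refine integrableOn_ball_of_norm_le_rpow (C := 1) (α := n - α) (by simpa [E] using hn)
      (by simp [E, hα0]) (Filter.Eventually.of_forall fun x => ?_) ?_
    · rw [Real.norm_of_nonneg (by positivity), one_mul, neg_sub]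
    · exact Measurable.aestronglyMeasurable (by fun_prop)
  have hk' := (integrable_indicator_iff Metric.isOpen_ball.measurableSet).2 hk
  have hone : Integrable ((Metric.ball (0 : E) φ.rOut).indicator fun _ => (1 : ℝ)) :=
    (integrable_indicator_iff Metric.isOpen_ball.measurableSet).2
      (integrableOn_const Metric.isBounded_ball.measure_lt_top.ne)
  refine (hone.convolution_integrand (ContinuousLinearMap.mul ℝ ℝ) hk').mono' ?_ ?_
  · have h1 : Measurable φ := φ.continuous.measurable
    exact ((measurable_formKernel n s t α).mul
      ((h1.comp measurable_snd).mul (h1.comp measurable_fst))).aestronglyMeasurable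
  · refine Filter.Eventually.of_forall fun p => ?_
    rw [Real.norm_of_nonneg (mul_nonneg (formKernel_nonneg ..) (mul_nonneg φ.nonneg φ.nonneg))]
    have hR : 0 ≤ (ContinuousLinearMap.mul ℝ ℝ)
        ((Metric.ball (0 : E) φ.rOut).indicator (fun _ => (1 : ℝ)) p.2)
        ((Metric.ball (0 : E) (2 * φ.rOut)).indicator (fun z : E => ‖z‖ ^ (α - n))
          (p.1 - p.2)) :=
      mul_nonneg (Set.indicator_nonneg (fun _ _ => zero_le_one) _)
        (Set.indicator_nonneg (fun _ _ => by positivity) _)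
    by_cases h2 : p.2 ∈ Metric.ball (0 : E) φ.rOut
    swap
    · rw [φ.zero_of_le_dist (by simpa using h2)]
      simpa using hR
    by_cases h1 : p.1 ∈ Metric.ball (0 : E) φ.rOut
    swap
    · rw [φ.zero_of_le_dist (x := p.1) (by simpa using h1)]
      simpa using hR
    have h3 : p.1 - p.2 ∈ Metric.ball (0 : E) (2 * φ.rOut) := by
      rw [mem_ball_zero_iff] at *
      linarith [norm_sub_le p.1 p.2]
    rw [Set.indicator_of_mem h2, Set.indicator_of_mem h3, ContinuousLinearMap.mul_apply', one_mul]
    have w1 : (1 + ‖p.2‖ ^ 2) ^ (-s / 2) ≤ 1 :=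
      Real.rpow_le_one_of_one_le_of_nonpos (by nlinarith [sq_nonneg ‖p.2‖]) (by linarith)
    have w2 : (1 + ‖p.1‖ ^ 2) ^ (-t / 2) ≤ 1 :=
      Real.rpow_le_one_of_one_le_of_nonpos (by nlinarith [sq_nonneg ‖p.1‖]) (by linarith)
    have w3 : φ p.2 * φ p.1 ≤ 1 := mul_le_one₀ φ.le_one φ.nonneg φ.le_one
    have w4 : 0 ≤ φ p.2 * φ p.1 := mul_nonneg φ.nonneg φ.nonneg
    calc formKernel n s t α p * (φ p.2 * φ p.1)
        ≤ (‖p.1 - p.2‖ ^ (α - n) * 1 * 1) * 1 := by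
          unfold formKernel
          gcongr
      _ = _ := by ring

lemma l2Norm_sq (n : ℕ) (g : EuclideanSpace ℝ (Fin n) → ℂ) :
    l2Norm n g * l2Norm n g = ∫ x, ‖g x‖ ^ 2 := by
  unfold l2Norm
  rw [← Real.sqrt_eq_rpow]
  exact Real.mul_self_sqrt (integral_nonneg fun x => by positivity)

lemma integral_bump_sq_le (n : ℕ) (φ : ContDiffBump (0 : EuclideanSpace ℝ (Fin n))) :
    ∫ x, φ x ^ 2 ≤
      φ.rOut ^ n * (volume : Measure (EuclideanSpace ℝ (Fin n))).real (Metric.ball 0 1) := by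
  set E := EuclideanSpace ℝ (Fin n)
  have hv := Measure.addHaar_real_closedBall (volume : Measure E) 0 φ.rOut_pos.le
  simp only [E, finrank_euclideanSpace_fin] at hv
  rw [← hv, ← integral_indicator_one Metric.isClosed_closedBall.measurableSet]
  refine integral_mono_of_nonneg (Filter.Eventually.of_forall fun x => by positivity)
    ((integrable_indicator_iff Metric.isClosed_closedBall.measurableSet).2
      (integrableOn_const Metric.isBounded_closedBall.measure_lt_top.ne))
    (Filter.Eventually.of_forall fun x => ?_)
  by_cases hx : x ∈ Metric.closedBall (0 : E) φ.rOut
  · simpa [Set.indicator_of_mem hx, abs_of_nonneg φ.nonneg] using φ.le_one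
  · have : φ x = 0 := φ.zero_of_le_dist (by
      rw [Metric.mem_closedBall] at hx
      linarith)
    simp [Set.indicator_of_notMem hx, this]

lemma ae_fst_ne_snd (n : ℕ) (hn : 1 ≤ n) :
    ∀ᵐ p ∂((volume : Measure (EuclideanSpace ℝ (Fin n))).prod volume), p.1 ≠ p.2 := by
  set E := EuclideanSpace ℝ (Fin n)
  have : Nontrivial E := Module.nontrivial_of_finrank_pos (R := ℝ) (by simpa [E] using (show 0 < n from hn))
  rw [ae_iff]
  simp only [ne_eq, not_not]
  refine Measure.measure_prod_null_of_ae_null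
    (measurableSet_eq_fun measurable_fst measurable_snd) ?_
  refine Filter.Eventually.of_forall fun y => ?_
  have : Prod.mk y ⁻¹' {p : E × E | p.1 = p.2} = {y} := by
    ext x
    exact eq_comm
  change volume (Prod.mk y ⁻¹' {p : E × E | p.1 = p.2}) = 0
  rw [this]
  exact measure_singleton y

/-- If the bilinear form with kernel `‖y-x‖^{α-n}(1+‖x‖²)^{-s/2}(1+‖y‖²)^{-t/2}` is bounded
on `L² × L²` (tested on Schwartz functions), then the integral of
`(1+‖x‖²+‖y‖²)^{-(n-α+s+t)/2}` over `B_m × B_m` grows at most like `mⁿ`. -/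
theorem kernel_bound_implies_growth (n : ℕ) (hn : 1 ≤ n) (s t : ℝ) (hs : 0 ≤ s)
    (ht : 0 ≤ t) (α : ℝ) (hα0 : 0 < α) (hαn : α < n)
    (hker : ∃ K > 0, ∀ g₀ h₀ : SchwartzMap (EuclideanSpace ℝ (Fin n)) ℂ,
      ‖∫ y : EuclideanSpace ℝ (Fin n), ∫ x : EuclideanSpace ℝ (Fin n),
          ((‖y - x‖ ^ (α - n) * (1 + ‖x‖ ^ 2) ^ (-s / 2) * (1 + ‖y‖ ^ 2) ^ (-t / 2) : ℝ) : ℂ) *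
            (g₀ x * (starRingEnd ℂ) (h₀ y))‖ ≤
        K * l2Norm n ⇑g₀ * l2Norm n ⇑h₀) :
    ∃ K₁ > 0, ∀ m : ℕ, 1 ≤ m →
      (∫ p in (Metric.closedBall (0 : EuclideanSpace ℝ (Fin n)) (m : ℝ)) ×ˢ
            (Metric.closedBall (0 : EuclideanSpace ℝ (Fin n)) (m : ℝ)),
          (1 + ‖p.1‖ ^ 2 + ‖p.2‖ ^ 2) ^ (-((n : ℝ) - α + s + t) / 2)) ≤
        K₁ * (m : ℝ) ^ n := by
  obtain ⟨K, hK, hker⟩ := hker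
  set E := EuclideanSpace ℝ (Fin n)
  set c : ℝ := (2 : ℝ) ^ ((α - n) / 2) with hc
  have hcpos : 0 < c := by positivity
  set V : ℝ := (volume : Measure E).real (Metric.ball 0 1) with hV
  have hVpos : 0 < V := ENNReal.toReal_pos (Metric.measure_ball_pos _ _ one_pos).ne'
    Metric.isBounded_ball.measure_lt_top.ne
  refine ⟨c⁻¹ * (K * (2 ^ n * V)), by positivity, fun m hm => ?_⟩
  have hm0 : (0 : ℝ) < m := by exact_mod_cast hm
  let φ : ContDiffBump (0 : E) := ⟨m, 2 * m, hm0, by linarith⟩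
  have hφc : HasCompactSupport (fun x => (φ x : ℂ)) :=
    φ.hasCompactSupport.comp_left (g := ((↑) : ℝ → ℂ)) Complex.ofReal_zero
  let g : SchwartzMap E ℂ := hφc.toSchwartzMap (Complex.ofRealCLM.contDiff.comp φ.contDiff)
  have hg : ∀ x, g x = (φ x : ℂ) := fun x => rfl
  have hint := integrable_testForm n hn hs ht hα0 φ
  have hform : ∫ p, formKernel n s t α p * (φ p.2 * φ p.1)
      ∂((volume : Measure E).prod volume) ≤ K * ((2 * m) ^ n * V) := by
    have h := hker g g
    rw [mul_assoc, l2Norm_sq] at h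
    have e : ∀ y x : E, ((‖y - x‖ ^ (α - n) * (1 + ‖x‖ ^ 2) ^ (-s / 2) *
        (1 + ‖y‖ ^ 2) ^ (-t / 2) : ℝ) : ℂ) * (g x * (starRingEnd ℂ) (g y))
        = ((formKernel n s t α (y, x) * (φ x * φ y) : ℝ) : ℂ) := by
      intro y x
      rw [hg, hg, Complex.conj_ofReal, formKernel]
      push_cast
      ring
    simp only [e, integral_complex_ofReal, Complex.norm_real] at h
    rw [integral_prod _ hint]
    refine (Real.le_norm_self _).trans (h.trans ?_)
    gcongr
    simp only [hg, Complex.norm_real, Real.norm_eq_abs, sq_abs]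
    exact integral_bump_sq_le n φ
  have hlow : c * (∫ p in (Metric.closedBall (0 : E) (m : ℝ)) ×ˢ (Metric.closedBall (0 : E) (m : ℝ)),
      (1 + ‖p.1‖ ^ 2 + ‖p.2‖ ^ 2) ^ (-((n : ℝ) - α + s + t) / 2)) ≤
      ∫ p, formKernel n s t α p * (φ p.2 * φ p.1) ∂((volume : Measure E).prod volume) := by
    have hms : MeasurableSet
        ((Metric.closedBall (0 : E) (m : ℝ)) ×ˢ (Metric.closedBall (0 : E) (m : ℝ))) :=
      Metric.isClosed_closedBall.measurableSet.prod Metric.isClosed_closedBall.measurableSet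
    rw [← integral_const_mul, Measure.volume_eq_prod]
    refine le_trans ?_ (setIntegral_le_integral (s := (Metric.closedBall (0 : E) (m : ℝ)) ×ˢ
      (Metric.closedBall (0 : E) (m : ℝ))) hint (Filter.Eventually.of_forall fun p =>
      mul_nonneg (formKernel_nonneg ..) (mul_nonneg φ.nonneg φ.nonneg)))
    refine integral_mono_of_nonneg (Filter.Eventually.of_forall fun p => ?_) hint.integrableOn ?_
    · have : 0 < 1 + ‖p.1‖ ^ 2 + ‖p.2‖ ^ 2 := by positivity
      simp only [Pi.zero_apply]
      positivity
    · filter_upwards [ae_restrict_of_ae (ae_fst_ne_snd n hn), ae_restrict_mem hms] with p hp hpm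
      rw [φ.one_of_mem_closedBall hpm.1, φ.one_of_mem_closedBall hpm.2, mul_one, mul_one]
      exact kernel_lower_bound n hs ht hαn p hp
  rw [mul_assoc, inv_mul_eq_div, le_div_iff₀ hcpos, mul_comm]
  refine (hlow.trans hform).trans_eq ?_
  rw [mul_pow]
  ring
end
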